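/- arXiv:2506.02936 — 12 statements merged into one kernel-verified Lean document; each statement's English description precedes it below -/
import Mathlib

section
/- The function P is strictly decreasing on (0, ∞); that is, for all 0 < w₁ < w₂ we have P(w₂) < P(w₁). -/
/-!
Both nonconstant terms of `P` have the shape `(a w^e + b)^r` with `a, b > 0`. The monotonicity
of such an expression depends only on the sign of `e * r`: it is increasing when `e * r > 0` and
decreasing when `e * r < 0` (`ces_lt_of_pos`, `ces_lt_of_neg`). For the second term of `P`,
`e * r = 1 - ψ₁ > 0`. For the first term, absorbing the factor `w^(ψ₁-1)` into the bracket gives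
`(α₁ + (1-α₁) w^(-ψ₁))^((1-ψ₁)/ψ₁)` (`first_term_eq`), so `e * r = -(1 - ψ₁) < 0`.
-/

/-- First CES bracket: `P₁(w) = α₁ w^{ψ₁} + 1 - α₁`. -/
noncomputable def P1 (α₁ ψ₁ w : ℝ) : ℝ := α₁ * w ^ ψ₁ + 1 - α₁

/-- Second CES bracket with `θ = α₁(1-α₂)/(α₂(1-α₁))`:
`P₂(w) = α₂ θ^{-ψ₂/(1-ψ₂)} w^{ψ₂(1-ψ₁)/(1-ψ₂)} + 1 - α₂`. -/
noncomputable def P2 (α₁ α₂ ψ₁ ψ₂ w : ℝ) : ℝ :=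
  α₂ * (α₁ * (1 - α₂) / (α₂ * (1 - α₁))) ^ (-(ψ₂ / (1 - ψ₂)))
    * w ^ (ψ₂ * (1 - ψ₁) / (1 - ψ₂)) + 1 - α₂

/-- `P(w) = α₁ A₁ w^{ψ₁-1} P₁(w)^{(1-ψ₁)/ψ₁} − (1-α₂) A₂ P₂(w)^{(1-ψ₂)/ψ₂} − (δ_k − δ_h)`. -/
noncomputable def Pfun (A₁ A₂ α₁ α₂ δk δh ψ₁ ψ₂ w : ℝ) : ℝ :=
  α₁ * A₁ * w ^ (ψ₁ - 1) * (P1 α₁ ψ₁ w) ^ ((1 - ψ₁) / ψ₁)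
    - (1 - α₂) * A₂ * (P2 α₁ α₂ ψ₁ ψ₂ w) ^ ((1 - ψ₂) / ψ₂) - (δk - δh)

/-- If `0 < e * r`, the maps `t ↦ t^e` and `t ↦ t^r` are both increasing or both decreasing, so
`w ↦ (a w^e + b)^r` is increasing. -/
theorem ces_lt_of_pos {a b e r x y : ℝ} (ha : 0 < a) (hb : 0 < b) (her : 0 < e * r)
    (hx : 0 < x) (hxy : x < y) : (a * x ^ e + b) ^ r < (a * y ^ e + b) ^ r := by
  have hy : 0 < y := hx.trans hxy
  rcases pos_and_pos_or_neg_and_neg_of_mul_pos her with ⟨he, hr⟩ | ⟨he, hr⟩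
  · have h : x ^ e < y ^ e := Real.rpow_lt_rpow hx.le hxy he
    exact Real.rpow_lt_rpow (by positivity) (by gcongr) hr
  · have h : y ^ e < x ^ e := Real.rpow_lt_rpow_of_neg hx hxy he
    exact Real.rpow_lt_rpow_of_neg (by positivity) (by gcongr) hr

theorem ces_lt_of_neg {a b e r x y : ℝ} (ha : 0 < a) (hb : 0 < b) (her : e * r < 0)
    (hx : 0 < x) (hxy : x < y) : (a * y ^ e + b) ^ r < (a * x ^ e + b) ^ r := by
  have hy : 0 < y := hx.trans hxy
  -- The expression is the inverse of the one with exponent `-r`, which is increasing.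
  have h := ces_lt_of_pos (e := e) (r := -r) ha hb (by linarith) hx hxy
  rw [Real.rpow_neg (by positivity), Real.rpow_neg (by positivity)] at h
  exact (inv_lt_inv₀ (by positivity) (by positivity)).1 h

theorem first_term_eq {α ψ w : ℝ} (hα : α ∈ Set.Ioo (0 : ℝ) 1) (hψ : ψ ≠ 0) (hw : 0 < w) :
    w ^ (ψ - 1) * (P1 α ψ w) ^ ((1 - ψ) / ψ)
      = ((1 - α) * w ^ (-ψ) + α) ^ ((1 - ψ) / ψ) := by
  obtain ⟨h0, h1⟩ := hα
  have h1' : 0 < 1 - α := by linarith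
  have hP : P1 α ψ w = w ^ ψ * ((1 - α) * w ^ (-ψ) + α) := by
    have : w ^ ψ * w ^ (-ψ) = 1 := by rw [← Real.rpow_add hw]; simp
    unfold P1
    linear_combination (-(1 - α)) * this
  rw [hP, Real.mul_rpow (by positivity) (by positivity), ← Real.rpow_mul hw.le,
    mul_div_cancel₀ _ hψ, ← mul_assoc, ← Real.rpow_add hw]
  simp

/-- the function `P` is strictly decreasing on `(0, ∞)`. -/
theorem stmt_0 (A₁ A₂ α₁ α₂ δk δh ψ₁ ψ₂ : ℝ)
    (hA₁ : 0 < A₁) (hA₂ : 0 < A₂)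
    (hα₁ : α₁ ∈ Set.Ioo (0 : ℝ) 1) (hα₂ : α₂ ∈ Set.Ioo (0 : ℝ) 1)
    (hψ₁ : ψ₁ < 1) (hψ₁0 : ψ₁ ≠ 0) (hψ₂ : ψ₂ < 1) (hψ₂0 : ψ₂ ≠ 0) :
    ∀ w₁ w₂ : ℝ, 0 < w₁ → w₁ < w₂ →
      Pfun A₁ A₂ α₁ α₂ δk δh ψ₁ ψ₂ w₂ < Pfun A₁ A₂ α₁ α₂ δk δh ψ₁ ψ₂ w₁ := by
  intro w₁ w₂ hw₁ hw
  have hw₂ : 0 < w₂ := hw₁.trans hw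
  obtain ⟨hα₂0, hα₂1⟩ := hα₂
  have h1 : 0 < 1 - α₁ := by linarith [hα₁.2]
  have h2 : 0 < 1 - α₂ := by linarith
  have hα₁0 : 0 < α₁ := hα₁.1
  have hs : 0 < 1 - ψ₁ := by linarith
  have ht : 1 - ψ₂ ≠ 0 := by linarith
  have hfirst : w₂ ^ (ψ₁ - 1) * (P1 α₁ ψ₁ w₂) ^ ((1 - ψ₁) / ψ₁)
      < w₁ ^ (ψ₁ - 1) * (P1 α₁ ψ₁ w₁) ^ ((1 - ψ₁) / ψ₁) := by
    rw [first_term_eq hα₁ hψ₁0 hw₁, first_term_eq hα₁ hψ₁0 hw₂]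
    have her : -ψ₁ * ((1 - ψ₁) / ψ₁) = -(1 - ψ₁) := by field_simp
    exact ces_lt_of_neg h1 hα₁0 (by linarith) hw₁ hw
  have hsecond : (P2 α₁ α₂ ψ₁ ψ₂ w₁) ^ ((1 - ψ₂) / ψ₂)
      < (P2 α₁ α₂ ψ₁ ψ₂ w₂) ^ ((1 - ψ₂) / ψ₂) := by
    have her : ψ₂ * (1 - ψ₁) / (1 - ψ₂) * ((1 - ψ₂) / ψ₂) = 1 - ψ₁ := by field_simp
    unfold P2
    rw [add_sub_assoc, add_sub_assoc]
    exact ces_lt_of_pos (by positivity) h2 (by linarith) hw₁ hw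
  have hA := mul_lt_mul_of_pos_left hfirst (mul_pos hα₁0 hA₁)
  have hB := mul_lt_mul_of_pos_left hsecond (mul_pos h2 hA₂)
  unfold Pfun
  linarith
end

section
/- If ψ₁ ∈ (0,1), then P(w) tends to +∞ as w tends to 0 from the right. -/
lemma tendsto_rpow_zero_of_pos {p : ℝ} (hp : 0 < p) :
    Filter.Tendsto (fun w : ℝ => w ^ p) (nhdsWithin 0 (Set.Ioi 0)) (nhds 0) := by
  have h := (Real.continuousAt_rpow_const (0 : ℝ) p (Or.inr hp.le)).tendsto
  rw [Real.zero_rpow hp.ne'] at h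
  exact h.mono_left nhdsWithin_le_nhds

lemma tendsto_rpow_atTop_of_neg {p : ℝ} (hp : p < 0) :
    Filter.Tendsto (fun w : ℝ => w ^ p) (nhdsWithin 0 (Set.Ioi 0)) Filter.atTop := by
  have h := (tendsto_rpow_atTop (neg_pos.2 hp)).comp
    (tendsto_inv_nhdsGT_zero (𝕜 := ℝ))
  refine h.congr' ?_
  filter_upwards [self_mem_nhdsWithin] with w hw
  have hw' : (0 : ℝ) < w := hw
  simp [Real.inv_rpow hw'.le, Real.rpow_neg hw'.le]

/-- The limit is `(1 - α₂) ^ ((1 - ψ₂) / ψ₂)` for `ψ₂ > 0` and `0` for `ψ₂ < 0`. -/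
lemma tendsto_P2_rpow {α₁ α₂ ψ₁ ψ₂ : ℝ}
    (hα₁ : α₁ ∈ Set.Ioo (0 : ℝ) 1) (hα₂ : α₂ ∈ Set.Ioo (0 : ℝ) 1)
    (hψ₁ : ψ₁ < 1) (hψ₂ : ψ₂ < 1) (hψ₂0 : ψ₂ ≠ 0) :
    ∃ L : ℝ, Filter.Tendsto (fun w : ℝ => (P2 α₁ α₂ ψ₁ ψ₂ w) ^ ((1 - ψ₂) / ψ₂))
      (nhdsWithin 0 (Set.Ioi 0)) (nhds L) := by
  obtain ⟨ha0, ha1⟩ := hα₁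
  obtain ⟨hb0, hb1⟩ := hα₂
  have h1 : 0 < 1 - ψ₁ := by linarith
  have h2 : 0 < 1 - ψ₂ := by linarith
  have h3 : 0 < 1 - α₁ := by linarith
  have h4 : 0 < 1 - α₂ := by linarith
  unfold P2
  have hc : 0 < α₂ * (α₁ * (1 - α₂) / (α₂ * (1 - α₁))) ^ (-(ψ₂ / (1 - ψ₂))) := by positivity
  generalize α₂ * (α₁ * (1 - α₂) / (α₂ * (1 - α₁))) ^ (-(ψ₂ / (1 - ψ₂))) = c at hc
  simp only [add_sub_assoc]
  rcases lt_or_gt_of_ne hψ₂0 with hneg | hpos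
  · have he : ψ₂ * (1 - ψ₁) / (1 - ψ₂) < 0 :=
      div_neg_of_neg_of_pos (mul_neg_of_neg_of_pos hneg h1) h2
    have hq : 0 < -((1 - ψ₂) / ψ₂) := neg_pos.2 (div_neg_of_pos_of_neg h2 hneg)
    have hP := Filter.tendsto_atTop_add_const_right _ (1 - α₂)
      ((tendsto_rpow_atTop_of_neg he).const_mul_atTop hc)
    have h := (tendsto_rpow_neg_atTop hq).comp hP
    rw [neg_neg] at h
    exact ⟨0, h⟩
  · have he : 0 < ψ₂ * (1 - ψ₁) / (1 - ψ₂) := by positivity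
    have hP := ((tendsto_rpow_zero_of_pos he).const_mul c).add_const (1 - α₂)
    exact ⟨_, hP.rpow_const (Or.inr (by positivity))⟩

/-- if `ψ₁ ∈ (0,1)` then `P(w) → +∞` as `w → 0⁺`. -/
theorem stmt_1 (A₁ A₂ α₁ α₂ δk δh ψ₁ ψ₂ : ℝ)
    (hA₁ : 0 < A₁) (hA₂ : 0 < A₂)
    (hα₁ : α₁ ∈ Set.Ioo (0 : ℝ) 1) (hα₂ : α₂ ∈ Set.Ioo (0 : ℝ) 1)
    (hψ₁ : ψ₁ ∈ Set.Ioo (0 : ℝ) 1) (hψ₂ : ψ₂ < 1) (hψ₂0 : ψ₂ ≠ 0) :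
    Filter.Tendsto (fun w : ℝ => Pfun A₁ A₂ α₁ α₂ δk δh ψ₁ ψ₂ w)
      (nhdsWithin 0 (Set.Ioi 0)) Filter.atTop := by
  obtain ⟨L, hL⟩ := tendsto_P2_rpow hα₁ hα₂ hψ₁.2 hψ₂ hψ₂0
  have h1 : 0 < 1 - α₁ := sub_pos.2 hα₁.2
  have hP1 : Filter.Tendsto (fun w : ℝ => P1 α₁ ψ₁ w) (nhdsWithin 0 (Set.Ioi 0))
      (nhds (1 - α₁)) := by
    have h := ((tendsto_rpow_zero_of_pos hψ₁.1).const_mul α₁).add_const (1 - α₁)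
    simpa [P1, add_sub_assoc] using h
  have hP1' := hP1.rpow_const (p := (1 - ψ₁) / ψ₁) (Or.inl h1.ne')
  have hfirst := ((tendsto_rpow_atTop_of_neg (sub_neg.2 hψ₁.2)).const_mul_atTop
    (mul_pos hα₁.1 hA₁)).atTop_mul_pos (Real.rpow_pos_of_pos h1 _) hP1'
  have h := (hfirst.atTop_add (hL.const_mul ((1 - α₂) * A₂)).neg).atTop_add
    (tendsto_const_nhds (x := -(δk - δh)))
  simpa only [Pfun, sub_eq_add_neg] using h
end

section
/- If ψ₂ ∈ (0,1), then P(w) tends to −∞ as w tends to +∞. -/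
lemma P1_rpow_le {α ψ w : ℝ} (hα : α ∈ Set.Ioo (0 : ℝ) 1) (hψ : ψ < 1) (hψ0 : ψ ≠ 0)
    (hw : 1 ≤ w) : P1 α ψ w ^ ((1 - ψ) / ψ) ≤ w ^ (1 - ψ) := by
  obtain ⟨h0, h1⟩ := hα
  have hw0 : 0 < w := by linarith
  have hpos : 0 < w ^ ψ := Real.rpow_pos_of_pos hw0 ψ
  have hP : 0 < P1 α ψ w := by
    unfold P1
    nlinarith [mul_pos h0 hpos]
  have key : (w ^ ψ) ^ ((1 - ψ) / ψ) = w ^ (1 - ψ) := by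
    rw [← Real.rpow_mul hw0.le, mul_div_cancel₀ _ hψ0]
  rw [← key]
  rcases lt_or_gt_of_ne hψ0 with h | h
  · have hle : w ^ ψ ≤ 1 := Real.rpow_le_one_of_one_le_of_nonpos hw h.le
    refine Real.rpow_le_rpow_of_nonpos hpos ?_ (div_nonpos_of_nonneg_of_nonpos (by linarith) h.le)
    unfold P1
    nlinarith
  · have hge : 1 ≤ w ^ ψ := Real.one_le_rpow hw h.le
    refine Real.rpow_le_rpow hP.le ?_ (div_nonneg (by linarith) h.le)
    unfold P1
    nlinarith

lemma tendsto_P2 {α₁ α₂ ψ₁ ψ₂ : ℝ} (hα₁ : α₁ ∈ Set.Ioo (0 : ℝ) 1)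
    (hα₂ : α₂ ∈ Set.Ioo (0 : ℝ) 1) (hψ₁ : ψ₁ < 1) (hψ₂ : ψ₂ ∈ Set.Ioo (0 : ℝ) 1) :
    Filter.Tendsto (P2 α₁ α₂ ψ₁ ψ₂) Filter.atTop Filter.atTop := by
  obtain ⟨a0, a1⟩ := hα₁
  obtain ⟨b0, b1⟩ := hα₂
  obtain ⟨p0, p1⟩ := hψ₂
  have a1' : 0 < 1 - α₁ := by linarith
  have b1' : 0 < 1 - α₂ := by linarith
  have q1' : 0 < 1 - ψ₁ := by linarith
  have p1' : 0 < 1 - ψ₂ := by linarith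
  have hc : 0 < α₂ * (α₁ * (1 - α₂) / (α₂ * (1 - α₁))) ^ (-(ψ₂ / (1 - ψ₂))) := by positivity
  have he : 0 < ψ₂ * (1 - ψ₁) / (1 - ψ₂) := by positivity
  have h := Filter.tendsto_atTop_add_const_right _ (1 - α₂)
    ((tendsto_rpow_atTop he).const_mul_atTop hc)
  refine h.congr fun w => ?_
  unfold P2
  ring

/-- if `ψ₂ ∈ (0,1)` then `P(w) → −∞` as `w → +∞`. -/
theorem stmt_2 (A₁ A₂ α₁ α₂ δk δh ψ₁ ψ₂ : ℝ)
    (hA₁ : 0 < A₁) (hA₂ : 0 < A₂)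
    (hα₁ : α₁ ∈ Set.Ioo (0 : ℝ) 1) (hα₂ : α₂ ∈ Set.Ioo (0 : ℝ) 1)
    (hψ₁ : ψ₁ < 1) (hψ₁0 : ψ₁ ≠ 0) (hψ₂ : ψ₂ ∈ Set.Ioo (0 : ℝ) 1) :
    Filter.Tendsto (fun w : ℝ => Pfun A₁ A₂ α₁ α₂ δk δh ψ₁ ψ₂ w)
      Filter.atTop Filter.atBot := by
  have he : 0 < (1 - ψ₂) / ψ₂ := div_pos (by linarith [hψ₂.2]) hψ₂.1
  have hc : 0 < (1 - α₂) * A₂ := mul_pos (by linarith [hα₂.2]) hA₂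
  have hQ := ((tendsto_rpow_atTop he).comp (tendsto_P2 hα₁ hα₂ hψ₁ hψ₂)).const_mul_atTop hc
  have hbound := Filter.tendsto_atBot_add_const_left _ (α₁ * A₁ - (δk - δh))
    (Filter.tendsto_neg_atTop_atBot.comp hQ)
  refine Filter.tendsto_atBot_mono' _ ?_ hbound
  filter_upwards [Filter.eventually_ge_atTop 1] with w hw
  have hw0 : 0 < w := by linarith
  have hfirst : α₁ * A₁ * w ^ (ψ₁ - 1) * P1 α₁ ψ₁ w ^ ((1 - ψ₁) / ψ₁) ≤ α₁ * A₁ := by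
    have hα := hα₁.1
    calc α₁ * A₁ * w ^ (ψ₁ - 1) * P1 α₁ ψ₁ w ^ ((1 - ψ₁) / ψ₁)
        ≤ α₁ * A₁ * w ^ (ψ₁ - 1) * w ^ (1 - ψ₁) :=
          mul_le_mul_of_nonneg_left (P1_rpow_le hα₁ hψ₁ hψ₁0 hw) (by positivity)
      _ = α₁ * A₁ := by
          rw [mul_assoc, ← Real.rpow_add hw0]
          simp
  simp only [Pfun, Function.comp_apply]
  linarith
end

section
/- If ψ₁ ∈ (0,1) and ψ₂ ∈ (0,1), then there exists a unique w* > 0 such that P(w*) = 0 (existence and uniqueness of the steady-state value w* of the ratio of effective physical to effective human capital in the good sector). -/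
/-- The function `x ↦ a (c + d x ^ q) ^ p`, the common shape of both marginal products. -/
noncomputable def cesFun (a c d q p x : ℝ) : ℝ := a * (c + d * x ^ q) ^ p

section cesFun

variable {a c d q p : ℝ}

lemma cesFun_strictMonoOn (ha : 0 < a) (hc : 0 < c) (hd : 0 < d) (hq : 0 < q) (hp : 0 < p) :
    StrictMonoOn (cesFun a c d q p) (Set.Ici 0) := by
  intro x hx y hy hxy
  have hx0 : (0 : ℝ) ≤ x := hx
  have h1 : x ^ q < y ^ q := Real.rpow_lt_rpow hx0 hxy hq
  have h2 : 0 ≤ x ^ q := Real.rpow_nonneg hx0 q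
  unfold cesFun
  gcongr

lemma cesFun_continuous (hq : 0 < q) (hp : 0 < p) : Continuous (cesFun a c d q p) := by
  have h1 : Continuous fun x : ℝ => c + d * x ^ q :=
    continuous_const.add (continuous_const.mul (Real.continuous_rpow_const hq.le))
  exact continuous_const.mul (h1.rpow_const fun _ => Or.inr hp.le)

lemma cesFun_tendsto (ha : 0 < a) (hd : 0 < d) (hq : 0 < q) (hp : 0 < p) :
    Filter.Tendsto (cesFun a c d q p) Filter.atTop Filter.atTop := by
  refine Filter.Tendsto.const_mul_atTop ha ((tendsto_rpow_atTop hp).comp ?_)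
  exact Filter.tendsto_atTop_add_const_left _ _ ((tendsto_rpow_atTop hq).const_mul_atTop hd)

end cesFun

/-- If `f` and `g` are continuous and increase strictly to `∞` on `[0, ∞)`, then
`w ↦ f w⁻¹ - g w` is continuous and decreases strictly from `∞` to
`-∞` on `(0, ∞)`, so it takes every value exactly once. -/
lemma existsUnique_inv_sub {f g : ℝ → ℝ} (hf : StrictMonoOn f (Set.Ici 0))
    (hg : StrictMonoOn g (Set.Ici 0)) (hfc : Continuous f) (hgc : Continuous g)
    (hft : Filter.Tendsto f Filter.atTop Filter.atTop)
    (hgt : Filter.Tendsto g Filter.atTop Filter.atTop) (δ : ℝ) :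
    ∃! w : ℝ, 0 < w ∧ f w⁻¹ - g w - δ = 0 := by
  have hanti : StrictAntiOn (fun w => f w⁻¹ - g w) (Set.Ioi 0) := by
    intro x hx y hy hxy
    have hx0 : (0 : ℝ) < x := hx
    have hy0 : (0 : ℝ) < y := hy
    have h1 : f y⁻¹ < f x⁻¹ :=
      hf (inv_nonneg.2 hy0.le) (inv_nonneg.2 hx0.le) (inv_strictAnti₀ hx0 hxy)
    have h2 : g x < g y := hg hx0.le hy0.le hxy
    show f y⁻¹ - g y < f x⁻¹ - g x
    linarith
  have hcont : ContinuousOn (fun w => f w⁻¹ - g w) (Set.Ioi 0) := by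
    refine (hfc.comp_continuousOn (continuousOn_id.inv₀ ?_)).sub hgc.continuousOn
    intro x hx
    exact (Set.mem_Ioi.1 hx).ne'
  -- For `w ≤ 1` the second term is at most `g 1`, so the difference exceeds `δ` for small `w`.
  obtain ⟨u, hu1, hu⟩ :=
    ((Filter.eventually_ge_atTop 1).and (hft.eventually_ge_atTop (δ + g 1))).exists
  -- For `w ≥ 1` the first term is at most `f 1`, so the difference is below `δ` for large `w`.
  obtain ⟨v, hv1, hv⟩ :=
    ((Filter.eventually_ge_atTop 1).and (hgt.eventually_ge_atTop (f 1 - δ))).exists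
  have hu0 : (0 : ℝ) < u := by linarith
  have hv0 : (0 : ℝ) < v := by linarith
  have hlo : f v⁻¹ - g v ≤ δ := by
    have := hf.monotoneOn (inv_nonneg.2 hv0.le) (Set.mem_Ici.2 zero_le_one)
      (inv_le_one_of_one_le₀ hv1)
    linarith
  have hhi : δ ≤ f u⁻¹⁻¹ - g u⁻¹ := by
    have := hg.monotoneOn (inv_nonneg.2 hu0.le) (Set.mem_Ici.2 zero_le_one)
      (inv_le_one_of_one_le₀ hu1)
    rw [inv_inv]
    linarith
  obtain ⟨w, hw, hwδ⟩ := isPreconnected_Ioi.intermediate_value (Set.mem_Ioi.2 hv0)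
    (Set.mem_Ioi.2 (inv_pos.2 hu0)) hcont ⟨hlo, hhi⟩
  refine ⟨w, ⟨hw, sub_eq_zero.2 hwδ⟩, ?_⟩
  rintro y ⟨hy, hyδ⟩
  exact hanti.injOn hy hw ((sub_eq_zero.1 hyδ).trans hwδ.symm)

/-- Absorbing `w ^ (ψ - 1) = (w ^ (-ψ)) ^ ((1 - ψ) / ψ)` into the first CES bracket. -/
lemma rpow_mul_P1_rpow {α ψ w : ℝ} (hα : α ∈ Set.Ioo (0 : ℝ) 1) (hψ : 0 < ψ) (hw : 0 < w) :
    w ^ (ψ - 1) * (P1 α ψ w) ^ ((1 - ψ) / ψ) = (α + (1 - α) * w⁻¹ ^ ψ) ^ ((1 - ψ) / ψ) := by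
  obtain ⟨h0, h1⟩ := hα
  have hwψ : 0 < w ^ ψ := Real.rpow_pos_of_pos hw ψ
  have hP : 0 ≤ P1 α ψ w := by
    unfold P1
    have := mul_pos h0 hwψ
    linarith
  have e1 : α + (1 - α) * w⁻¹ ^ ψ = w ^ (-ψ) * P1 α ψ w := by
    rw [Real.inv_rpow hw.le, Real.rpow_neg hw.le, P1]
    field_simp
    ring
  have e2 : -ψ * ((1 - ψ) / ψ) = ψ - 1 := by
    field_simp
    ring
  rw [e1, Real.mul_rpow (Real.rpow_nonneg hw.le _) hP, ← Real.rpow_mul hw.le, e2]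

/-- if `ψ₁, ψ₂ ∈ (0,1)`, there is a unique `w* > 0` with `P(w*) = 0`. -/
theorem stmt_3 (A₁ A₂ α₁ α₂ δk δh ψ₁ ψ₂ : ℝ)
    (hA₁ : 0 < A₁) (hA₂ : 0 < A₂)
    (hα₁ : α₁ ∈ Set.Ioo (0 : ℝ) 1) (hα₂ : α₂ ∈ Set.Ioo (0 : ℝ) 1)
    (hψ₁ : ψ₁ ∈ Set.Ioo (0 : ℝ) 1) (hψ₂ : ψ₂ ∈ Set.Ioo (0 : ℝ) 1) :
    ∃! w : ℝ, 0 < w ∧ Pfun A₁ A₂ α₁ α₂ δk δh ψ₁ ψ₂ w = 0 := by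
  have hp₁ : 0 < (1 - ψ₁) / ψ₁ := div_pos (sub_pos.2 hψ₁.2) hψ₁.1
  have hp₂ : 0 < (1 - ψ₂) / ψ₂ := div_pos (sub_pos.2 hψ₂.2) hψ₂.1
  have hq₂ : 0 < ψ₂ * (1 - ψ₁) / (1 - ψ₂) :=
    div_pos (mul_pos hψ₂.1 (sub_pos.2 hψ₁.2)) (sub_pos.2 hψ₂.2)
  have ha₁ : 0 < α₁ * A₁ := mul_pos hα₁.1 hA₁
  have hc₂ : 0 < 1 - α₂ := sub_pos.2 hα₂.2
  have hd₁ : 0 < 1 - α₁ := sub_pos.2 hα₁.2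
  have ha₂ : 0 < (1 - α₂) * A₂ := mul_pos hc₂ hA₂
  have hd₂ : 0 < α₂ * (α₁ * (1 - α₂) / (α₂ * (1 - α₁))) ^ (-(ψ₂ / (1 - ψ₂))) :=
    mul_pos hα₂.1 (Real.rpow_pos_of_pos
      (div_pos (mul_pos hα₁.1 hc₂) (mul_pos hα₂.1 hd₁)) _)
  have key := existsUnique_inv_sub
    (cesFun_strictMonoOn ha₁ hα₁.1 hd₁ hψ₁.1 hp₁) (cesFun_strictMonoOn ha₂ hc₂ hd₂ hq₂ hp₂)
    (cesFun_continuous hψ₁.1 hp₁) (cesFun_continuous hq₂ hp₂)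
    (cesFun_tendsto ha₁ hd₁ hψ₁.1 hp₁) (cesFun_tendsto ha₂ hd₂ hq₂ hp₂) (δk - δh)
  refine (existsUnique_congr fun w => and_congr_right fun hw => ?_).2 key
  rw [Pfun, mul_assoc (α₁ * A₁), rpow_mul_P1_rpow hα₁ hψ₁.1 hw, P2, add_sub_assoc,
    add_comm _ (1 - α₂), cesFun, cesFun]
end

section
/- For every ψ < 1 with ψ ≠ 0, the derivative of the normalized good-sector output with respect to the substitution parameter satisfies dy₁/dψ = −(1/ψ²)·y₁(ψ)·[ π₁(ψ,w)·ln(π̄₁/π₁(ψ,w)) + (1−π₁(ψ,w))·ln((1−π̄₁)/(1−π₁(ψ,w))) ]. -/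
/-!
The two powers in `y₁` share the exponent `1/ψ`, so the factor `w̄^{1−ψ} + m` cancels and
`y₁(ψ) = C · (X(ψ)/(w̄+m))^{1/ψ}` with `X(ψ) = w̄^{1−ψ} w^ψ + m` and `C` independent of `ψ`
(`y1_eq`). Logarithmic differentiation gives
`y₁'/y₁ = −(1/ψ²)·[ln (X/(w̄+m)) − ψ π₁ (ln w − ln w̄)]`, because `X'/X = π₁ (ln w − ln w̄)`.
The bracket is the relative-entropy expression in the claim: `(1−π̄₁)/(1−π₁) = X/(w̄+m)`, while
`π̄₁/π₁` is the same quotient times `(w̄/w)^ψ` (`entropy_eq`).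
-/

/-- The physical capital share `π₁(ψ,w) = w̄^{1−ψ} w^{ψ} / (w̄^{1−ψ} w^{ψ} + m)`. -/
noncomputable def pi1 (wb m ψ w : ℝ) : ℝ :=
  wb ^ (1 - ψ) * w ^ ψ / (wb ^ (1 - ψ) * w ^ ψ + m)

/-- Normalized distribution parameter `α₁(ψ) = w̄^{1−ψ}/(w̄^{1−ψ}+m)`. -/
noncomputable def alpha1 (wb m ψ : ℝ) : ℝ := wb ^ (1 - ψ) / (wb ^ (1 - ψ) + m)

/-- Normalized efficiency parameter `A₁(ψ) = (ȳ₁/(h̄ū))·[(w̄^{1−ψ}+m)/(w̄+m)]^{1/ψ}`. -/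
noncomputable def Anorm1 (yb hb ub wb m ψ : ℝ) : ℝ :=
  yb / (hb * ub) * ((wb ^ (1 - ψ) + m) / (wb + m)) ^ (1 / ψ)

/-- Normalized good-sector output `y₁(ψ) = A₁(ψ)·hu·(α₁(ψ)w^ψ + 1 − α₁(ψ))^{1/ψ}`. -/
noncomputable def y1 (yb hb ub wb m h u w ψ : ℝ) : ℝ :=
  Anorm1 yb hb ub wb m ψ * (h * u)
    * (alpha1 wb m ψ * w ^ ψ + 1 - alpha1 wb m ψ) ^ (1 / ψ)

/-- Closed form of the normalized output in which `w̄^{1−t} + m` has cancelled. -/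
lemma y1_eq {yb hb ub wb m h u w : ℝ} (hwb : 0 < wb) (hm : 0 < m) (hw : 0 < w) (t : ℝ) :
    y1 yb hb ub wb m h u w t
      = yb / (hb * ub) * (h * u) * ((wb ^ (1 - t) * w ^ t + m) / (wb + m)) ^ (1 / t) := by
  have hP : 0 < wb ^ (1 - t) := Real.rpow_pos_of_pos hwb _
  have hQ : 0 < w ^ t := Real.rpow_pos_of_pos hw _
  have hα : alpha1 wb m t * w ^ t + 1 - alpha1 wb m t
      = (wb ^ (1 - t) * w ^ t + m) / (wb ^ (1 - t) + m) := by
    unfold alpha1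
    field_simp
    ring
  have hprod : (wb ^ (1 - t) * w ^ t + m) / (wb + m)
      = (wb ^ (1 - t) + m) / (wb + m)
        * ((wb ^ (1 - t) * w ^ t + m) / (wb ^ (1 - t) + m)) := by
    field_simp
  unfold y1 Anorm1
  rw [hα, hprod, Real.mul_rpow (by positivity) (by positivity)]
  ring

/-- The relative-entropy expression, with all shares eliminated from the logarithms. -/
lemma entropy_eq {wb m w : ℝ} (hwb : 0 < wb) (hm : 0 < m) (hw : 0 < w) (t : ℝ) :
    pi1 wb m t w * Real.log (wb / (wb + m) / pi1 wb m t w)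
        + (1 - pi1 wb m t w) * Real.log ((1 - wb / (wb + m)) / (1 - pi1 wb m t w))
      = Real.log ((wb ^ (1 - t) * w ^ t + m) / (wb + m))
        - t * pi1 wb m t w * (Real.log w - Real.log wb) := by
  have hP : 0 < wb ^ (1 - t) := Real.rpow_pos_of_pos hwb _
  have hQ : 0 < w ^ t := Real.rpow_pos_of_pos hw _
  have hX : 0 < (wb ^ (1 - t) * w ^ t + m) / (wb + m) := by positivity
  have h1 : wb / (wb + m) / pi1 wb m t w
      = (wb ^ (1 - t) * w ^ t + m) / (wb + m) * (wb / (wb ^ (1 - t) * w ^ t)) := by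
    unfold pi1
    field_simp
  have h2 : (1 - wb / (wb + m)) / (1 - pi1 wb m t w)
      = (wb ^ (1 - t) * w ^ t + m) / (wb + m) := by
    have e1 : 1 - wb / (wb + m) = m / (wb + m) := by
      field_simp
      ring
    have e2 : 1 - pi1 wb m t w = m / (wb ^ (1 - t) * w ^ t + m) := by
      unfold pi1
      field_simp
      ring
    rw [e1, e2]
    field_simp
  have h3 : Real.log (wb / (wb ^ (1 - t) * w ^ t)) = -t * (Real.log w - Real.log wb) := by
    rw [Real.log_div hwb.ne' (by positivity), Real.log_mul hP.ne' hQ.ne',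
      Real.log_rpow hwb, Real.log_rpow hw]
    ring
  rw [h1, h2, Real.log_mul hX.ne' (by positivity), h3]
  ring

/-- for `ψ < 1`, `ψ ≠ 0`, the derivative of the normalized good-sector output
with respect to the substitution parameter satisfies
`dy₁/dψ = −(1/ψ²)·y₁(ψ)·[π₁ ln(π̄₁/π₁) + (1−π₁) ln((1−π̄₁)/(1−π₁))]`. -/
theorem stmt_7 (kb hb yb ub vb m k h u v wb πb w ψ : ℝ)
    (hkb : 0 < kb) (hhb : 0 < hb) (hyb : 0 < yb)
    (hub : ub ∈ Set.Ioo (0 : ℝ) 1) (hvb : vb ∈ Set.Ioo (0 : ℝ) 1) (hm : 0 < m)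
    (hwb : wb = kb * vb / (hb * ub)) (hπb : πb = wb / (wb + m))
    (hk : 0 < k) (hh : 0 < h) (hu : u ∈ Set.Ioo (0 : ℝ) 1) (hv : v ∈ Set.Ioo (0 : ℝ) 1)
    (hwdef : w = k * v / (h * u))
    (hψ : ψ < 1) (hψ0 : ψ ≠ 0) :
    HasDerivAt (fun t : ℝ => y1 yb hb ub wb m h u w t)
      (-(1 / ψ ^ 2) * y1 yb hb ub wb m h u w ψ
        * (pi1 wb m ψ w * Real.log (πb / pi1 wb m ψ w)
          + (1 - pi1 wb m ψ w) * Real.log ((1 - πb) / (1 - pi1 wb m ψ w)))) ψ := by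
  have hb0 : 0 < ub := hub.1
  have hv0 : 0 < vb := hvb.1
  have hu0 : 0 < u := hu.1
  have hv1 : 0 < v := hv.1
  have hwb0 : 0 < wb := by rw [hwb]; positivity
  have hw0 : 0 < w := by rw [hwdef]; positivity
  have hP : 0 < wb ^ (1 - ψ) := Real.rpow_pos_of_pos hwb0 _
  have hQ : 0 < w ^ ψ := Real.rpow_pos_of_pos hw0 _
  have hX : 0 < (wb ^ (1 - ψ) * w ^ ψ + m) / (wb + m) := by positivity
  rw [hπb, entropy_eq hwb0 hm hw0, y1_eq hwb0 hm hw0,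
    funext fun t => y1_eq (yb := yb) (hb := hb) (ub := ub) (h := h) (u := u) hwb0 hm hw0 t]
  have d1 : HasDerivAt (fun t : ℝ => wb ^ (1 - t)) (-(wb ^ (1 - ψ) * Real.log wb)) ψ := by
    convert ((hasDerivAt_id' ψ).const_sub 1).const_rpow hwb0 using 1
    ring
  have d2 : HasDerivAt (fun t : ℝ => w ^ t) (w ^ ψ * Real.log w) ψ := by
    convert (hasDerivAt_id' ψ).const_rpow hw0 using 1
    ring
  have d3 := ((d1.mul d2).add_const m).div_const (wb + m)
  have d4 : HasDerivAt (fun t : ℝ => 1 / t) (-(1 / ψ ^ 2)) ψ := by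
    simpa [one_div] using hasDerivAt_inv hψ0
  have d5 := (d3.rpow d4 hX).const_mul (yb / (hb * ub) * (h * u))
  refine d5.congr_deriv ?_
  simp only [Pi.mul_apply]
  -- `HasDerivAt.rpow` yields the exponent `1/ψ − 1`; split off one power so that `y₁` factors out.
  rw [Real.rpow_sub_one hX.ne']
  unfold pi1
  generalize Real.log ((wb ^ (1 - ψ) * w ^ ψ + m) / (wb + m)) = L
  generalize ((wb ^ (1 - ψ) * w ^ ψ + m) / (wb + m)) ^ (1 / ψ) = Y
  generalize wb ^ (1 - ψ) = P at *
  generalize w ^ ψ = Q at *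
  have : P * Q + m ≠ 0 := by positivity
  field_simp
  ring
end

section
/- If w ≠ w̄, then dy₁/dψ > 0 for every ψ < 1 with ψ ≠ 0; that is, the normalized good-sector output is strictly increasing in the substitution parameter (equivalently, in the elasticity of substitution σ₁ = 1/(1−ψ)) away from the baseline input ratio. -/
/-- Strict Jensen inequality for `x ↦ x * log x` at the points `x` and `1`, where the second point
contributes nothing because `log 1 = 0`. -/
lemma mul_log_jensen {a x : ℝ} (ha : 0 < a) (ha1 : a < 1) (hx : 0 < x) (hx1 : x ≠ 1) :
    (a * x + (1 - a)) * Real.log (a * x + (1 - a)) < a * (x * Real.log x) := by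
  have h := Real.strictConvexOn_mul_log.2 (Set.mem_Ici.2 hx.le)
    (Set.mem_Ici.2 (zero_le_one' ℝ)) hx1 ha (sub_pos.2 ha1) (by ring)
  simpa using h

/-- The weighted power mean of `r ≠ 1` and `1` is differentiable in its exponent, with positive
derivative. -/
lemma powerMean_hasDerivAt_pos {a r t : ℝ} (ha : 0 < a) (ha1 : a < 1) (hr : 0 < r)
    (hr1 : r ≠ 1) (ht : t ≠ 0) :
    ∃ d, 0 < d ∧ HasDerivAt (fun s : ℝ => (a * r ^ s + (1 - a)) ^ (1 / s)) d t := by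
  have hM : ∀ s : ℝ, 0 < a * r ^ s + (1 - a) := fun s => by
    have := Real.rpow_pos_of_pos hr s
    have := sub_pos.2 ha1
    positivity
  have hx1 : r ^ t ≠ 1 := fun h => by
    exact hr1 ((Real.rpow_left_inj hr.le zero_le_one ht).1 (h.trans (Real.one_rpow t).symm))
  have hJ := mul_log_jensen ha ha1 (Real.rpow_pos_of_pos hr t) hx1
  rw [Real.log_rpow hr] at hJ
  have hx : HasDerivAt (fun s : ℝ => a * r ^ s + (1 - a)) (a * (r ^ t * Real.log r)) t :=
    ((Real.hasStrictDerivAt_const_rpow hr t).hasDerivAt.const_mul a).add_const _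
  have hE := ((hx.log (hM t).ne').div (hasDerivAt_id t) ht).exp
  refine ⟨_, ?_, hE.congr_of_eventuallyEq (Filter.Eventually.of_forall fun s => ?_)⟩
  · refine mul_pos (Real.exp_pos _) (div_pos ?_ (by positivity))
    have h := hM t
    have : a * (r ^ t * Real.log r) / (a * r ^ t + (1 - a)) * id t
        - Real.log (a * r ^ t + (1 - a)) * 1
        = (a * (r ^ t * (t * Real.log r))
          - (a * r ^ t + (1 - a)) * Real.log (a * r ^ t + (1 - a)))
          / (a * r ^ t + (1 - a)) := by
      simp only [id]
      field_simp
    rw [this]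
    exact div_pos (sub_pos.2 hJ) h
  · simp [Real.rpow_def_of_pos (hM s), div_eq_mul_inv]

/-- The factor `wb ^ (1 - t) + m` in `Anorm1` cancels the denominator of `alpha1`, so normalized
output is a power mean of the relative input ratio `w / wb` and `1`. -/
lemma y1_eq_powerMean (yb hb ub h u : ℝ) {wb w m : ℝ} (hwb : 0 < wb) (hw : 0 < w) (hm : 0 < m)
    (t : ℝ) :
    y1 yb hb ub wb m h u w t = yb / (hb * ub) * (h * u)
      * (wb / (wb + m) * (w / wb) ^ t + (1 - wb / (wb + m))) ^ (1 / t) := by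
  have hp := Real.rpow_pos_of_pos hwb (1 - t)
  have hq := Real.rpow_pos_of_pos hwb t
  have hwt := Real.rpow_pos_of_pos hw t
  have hB : alpha1 wb m t * w ^ t + 1 - alpha1 wb m t
      = (wb ^ (1 - t) * w ^ t + m) / (wb ^ (1 - t) + m) := by
    unfold alpha1
    field_simp
    ring
  have hsplit : wb ^ (1 - t) * wb ^ t = wb := by
    rw [← Real.rpow_add hwb]
    simp
  have hC : (wb ^ (1 - t) + m) / (wb + m)
      * ((wb ^ (1 - t) * w ^ t + m) / (wb ^ (1 - t) + m))
      = wb / (wb + m) * (w / wb) ^ t + (1 - wb / (wb + m)) := by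
    have e : wb * (w / wb) ^ t = wb ^ (1 - t) * w ^ t := by
      rw [Real.div_rpow hw.le hwb.le, mul_div_assoc', div_eq_iff hq.ne']
      linear_combination (-w ^ t) * hsplit
    rw [mul_comm, div_mul_div_cancel₀ (by positivity), ← e]
    field_simp
    ring
  rw [← hC, Real.mul_rpow (by positivity) (by positivity), y1, hB, Anorm1]
  ring

/-- if `w ≠ w̄`, then `dy₁/dψ > 0` for every `ψ < 1` with `ψ ≠ 0`: the
normalized good-sector output is strictly increasing in the substitution parameter
away from the baseline input ratio. -/
theorem stmt_8 (kb hb yb ub vb m k h u v wb w ψ : ℝ)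
    (hkb : 0 < kb) (hhb : 0 < hb) (hyb : 0 < yb)
    (hub : ub ∈ Set.Ioo (0 : ℝ) 1) (hvb : vb ∈ Set.Ioo (0 : ℝ) 1) (hm : 0 < m)
    (hwb : wb = kb * vb / (hb * ub))
    (hk : 0 < k) (hh : 0 < h) (hu : u ∈ Set.Ioo (0 : ℝ) 1) (hv : v ∈ Set.Ioo (0 : ℝ) 1)
    (hwdef : w = k * v / (h * u)) (hne : w ≠ wb)
    (hψ : ψ < 1) (hψ0 : ψ ≠ 0) :
    0 < deriv (fun t : ℝ => y1 yb hb ub wb m h u w t) ψ := by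
  obtain ⟨hub, -⟩ := hub
  obtain ⟨hvb, -⟩ := hvb
  obtain ⟨hu, -⟩ := hu
  obtain ⟨hv, -⟩ := hv
  have hwb0 : 0 < wb := by rw [hwb]; positivity
  have hw0 : 0 < w := by rw [hwdef]; positivity
  obtain ⟨d, hd, hD⟩ := powerMean_hasDerivAt_pos (a := wb / (wb + m)) (r := w / wb) (t := ψ)
    (by positivity) ((div_lt_one (by positivity)).2 (by linarith)) (by positivity)
    (fun h => hne ((div_eq_one_iff_eq hwb0.ne').1 h)) hψ0
  simp only [y1_eq_powerMean yb hb ub h u hwb0 hw0 hm]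
  rw [(hD.const_mul (yb / (hb * ub) * (h * u))).deriv]
  positivity
end

section
/- If x ≠ w̄/τ̄, then dy₂/dψ > 0 for every ψ < 1 with ψ ≠ 0; that is, the normalized education-sector output is strictly increasing in the substitution parameter (equivalently, in the elasticity of substitution σ₂ = 1/(1−ψ)) away from the baseline input ratio. -/
/-!
Write `w = wb / τb`, `p = w / (w + m)`, `q = m / (w + m)` and `z = x / w`. The normalization makes
the factor `w ^ (1 - t) + m` of `Anorm2` cancel against the denominator of `alpha2`, so the output
is a positive constant times the power mean `(p * z ^ t + q) ^ (1 / t)` of `z` and `1` with weights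
`p + q = 1` (`y2_eq_powerMean`). With `S = p * z ^ t + q`, the logarithmic derivative of this mean
in `t` is `(p * z ^ t * log (z ^ t) - S * log S) / (S * t ^ 2)`, whose numerator is positive by
strict convexity of `a ↦ a * log a` at the distinct points `z ^ t` and `1`
(`mul_log_mean_lt`).
-/

/-- Normalized education-sector distribution parameter
`α₂(ψ) = (w̄/τ̄)^{1−ψ}/((w̄/τ̄)^{1−ψ}+m)`. -/
noncomputable def alpha2 (wτb m ψ : ℝ) : ℝ := wτb ^ (1 - ψ) / (wτb ^ (1 - ψ) + m)

/-- Normalized education-sector efficiency parameter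
`A₂(ψ) = (ȳ₂/(h̄(1−ū)))·[((w̄/τ̄)^{1−ψ}+m)/(w̄/τ̄+m)]^{1/ψ}`. -/
noncomputable def Anorm2 (yb hb ub wτb m ψ : ℝ) : ℝ :=
  yb / (hb * (1 - ub)) * ((wτb ^ (1 - ψ) + m) / (wτb + m)) ^ (1 / ψ)

/-- Normalized education-sector output
`y₂(ψ) = A₂(ψ)·h(1−u)·(α₂(ψ)x^ψ + 1 − α₂(ψ))^{1/ψ}`. -/
noncomputable def y2 (yb hb ub wτb m h u x ψ : ℝ) : ℝ :=
  Anorm2 yb hb ub wτb m ψ * (h * (1 - u))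
    * (alpha2 wτb m ψ * x ^ ψ + 1 - alpha2 wτb m ψ) ^ (1 / ψ)

/-- The output is a constant times a weighted power mean of `x / w` and `1`, written as an
exponential. At `t = 0` both sides take the value given by `1 / 0 = 0`. -/
lemma y2_eq_powerMean {yb hb ub w m h u x : ℝ} (hw : 0 < w) (hm : 0 < m) (hx : 0 < x) (t : ℝ) :
    y2 yb hb ub w m h u x t = yb / (hb * (1 - ub)) * (h * (1 - u)) *
      Real.exp (Real.log (w / (w + m) * (x / w) ^ t + m / (w + m)) / t) := by
  have hW : 0 < w ^ (1 - t) := Real.rpow_pos_of_pos hw _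
  have hX : 0 < x ^ t := Real.rpow_pos_of_pos hx _
  have hz : 0 < (x / w) ^ t := Real.rpow_pos_of_pos (div_pos hx hw) _
  have hwt : 0 < w ^ t := Real.rpow_pos_of_pos hw _
  have e : w ^ (1 - t) * x ^ t = w * (x / w) ^ t := by
    rw [Real.rpow_sub hw, Real.rpow_one, Real.div_rpow hx.le hw.le]
    ring
  have e1 : alpha2 w m t * x ^ t + 1 - alpha2 w m t
      = (w ^ (1 - t) * x ^ t + m) / (w ^ (1 - t) + m) := by
    unfold alpha2
    field_simp
    ring
  have e2 : (w ^ (1 - t) + m) / (w + m) * ((w ^ (1 - t) * x ^ t + m) / (w ^ (1 - t) + m))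
      = w / (w + m) * (x / w) ^ t + m / (w + m) := by
    rw [e]
    field_simp
  have hS : 0 < w / (w + m) * (x / w) ^ t + m / (w + m) := by positivity
  rw [y2, Anorm2, e1, ← mul_one_div (Real.log _) t, ← Real.rpow_def_of_pos hS, ← e2,
    Real.mul_rpow (by positivity) (by positivity)]
  ring

lemma mul_log_mean_lt {p q a : ℝ} (hp : 0 < p) (hq : 0 < q) (hpq : p + q = 1) (ha : 0 < a)
    (ha1 : a ≠ 1) : (p * a + q) * Real.log (p * a + q) < p * a * Real.log a := by
  have := Real.strictConvexOn_mul_log.2 (Set.mem_Ici.2 ha.le) (Set.mem_Ici.2 zero_le_one)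
    ha1 hp hq hpq
  simpa [mul_assoc] using this

/-- if `x ≠ w̄/τ̄`, then `dy₂/dψ > 0` for every `ψ < 1` with `ψ ≠ 0`: the
normalized education-sector output is strictly increasing in the substitution parameter
away from the baseline input ratio. -/
theorem stmt_9 (kb hb yb ub vb m k h u v wb τb x ψ : ℝ)
    (hkb : 0 < kb) (hhb : 0 < hb) (hyb : 0 < yb)
    (hub : ub ∈ Set.Ioo (0 : ℝ) 1) (hvb : vb ∈ Set.Ioo (0 : ℝ) 1) (hm : 0 < m)
    (hwb : wb = kb * vb / (hb * ub)) (hτb : τb = vb * (1 - ub) / (ub * (1 - vb)))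
    (hk : 0 < k) (hh : 0 < h) (hu : u ∈ Set.Ioo (0 : ℝ) 1) (hv : v ∈ Set.Ioo (0 : ℝ) 1)
    (hxdef : x = k * (1 - v) / (h * (1 - u))) (hne : x ≠ wb / τb)
    (hψ : ψ < 1) (hψ0 : ψ ≠ 0) :
    0 < deriv (fun t : ℝ => y2 yb hb ub (wb / τb) m h u x t) ψ := by
  obtain ⟨hub0, hub1⟩ := hub
  obtain ⟨hvb0, hvb1⟩ := hvb
  have hub' : 0 < 1 - ub := sub_pos.2 hub1
  have hvb' : 0 < 1 - vb := sub_pos.2 hvb1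
  have hu' : 0 < 1 - u := sub_pos.2 hu.2
  have hv' : 0 < 1 - v := sub_pos.2 hv.2
  have hw : 0 < wb / τb := by rw [hwb, hτb]; positivity
  have hx : 0 < x := by rw [hxdef]; positivity
  clear hxdef hwb hτb
  generalize wb / τb = w at *
  have hz : 0 < x / w := div_pos hx hw
  have hz1 : x / w ≠ 1 := fun H => hne ((div_eq_one_iff_eq hw.ne').1 H)
  have hp : 0 < w / (w + m) := by positivity
  have hq : 0 < m / (w + m) := by positivity
  have hpq : w / (w + m) + m / (w + m) = 1 := by field_simp
  have hC : 0 < yb / (hb * (1 - ub)) * (h * (1 - u)) := by positivity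
  simp_rw [y2_eq_powerMean hw hm hx]
  generalize yb / (hb * (1 - ub)) * (h * (1 - u)) = C at *
  generalize x / w = z at *
  generalize w / (w + m) = p at *
  generalize m / (w + m) = q at *
  have ha : 0 < z ^ ψ := Real.rpow_pos_of_pos hz _
  have ha1 : z ^ ψ ≠ 1 := fun H => by
    have H' := congrArg Real.log H
    rw [Real.log_rpow hz, Real.log_one] at H'
    exact Real.log_ne_zero_of_pos_of_ne_one hz hz1 ((mul_eq_zero.1 H').resolve_left hψ0)
  have hS : 0 < p * z ^ ψ + q := by positivity
  have hd := ((((((hasDerivAt_id ψ).const_rpow hz).const_mul p).add_const q).log hS.ne').div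
    (hasDerivAt_id ψ) hψ0).exp.const_mul C
  have hkey := mul_log_mean_lt hp hq hpq ha ha1
  rw [Real.log_rpow hz] at hkey
  refine lt_of_lt_of_eq ?_ hd.deriv.symm
  refine mul_pos hC (mul_pos (Real.exp_pos _) (div_pos ?_ (by simp only [id]; positivity)))
  simp only [id, mul_one]
  rw [sub_pos, div_mul_eq_mul_div, lt_div_iff₀ hS]
  linarith
end

section
/- Let ψ < 1 and π, π̄ ∈ (0,1) with π ≠ π̄, and suppose (1−ψ)(1−π) ≤ 1. Then [1 − (1−ψ)(1−π)]·ln(π̄/π) + (1−ψ)(1−π)·ln((1−π̄)/(1−π)) < ψ·(π̄ − π)/π. In particular, if ψ > 0 and π̄ < π, the left-hand side is strictly negative. -/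
/-- for `ψ < 1`, `π, π̄ ∈ (0,1)` with `π ≠ π̄` and `(1−ψ)(1−π) ≤ 1`,
`[1 − (1−ψ)(1−π)]·ln(π̄/π) + (1−ψ)(1−π)·ln((1−π̄)/(1−π)) < ψ·(π̄ − π)/π`; in particular,
if `ψ > 0` and `π̄ < π`, the left-hand side is strictly negative. -/
theorem stmt_14 (ψ π πb : ℝ) (hψ : ψ < 1)
    (hπ : π ∈ Set.Ioo (0 : ℝ) 1) (hπb : πb ∈ Set.Ioo (0 : ℝ) 1) (hne : π ≠ πb)
    (hwt : (1 - ψ) * (1 - π) ≤ 1) :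
    (1 - (1 - ψ) * (1 - π)) * Real.log (πb / π)
        + (1 - ψ) * (1 - π) * Real.log ((1 - πb) / (1 - π)) < ψ * (πb - π) / π
    ∧ (0 < ψ → πb < π →
        (1 - (1 - ψ) * (1 - π)) * Real.log (πb / π)
          + (1 - ψ) * (1 - π) * Real.log ((1 - πb) / (1 - π)) < 0) := by
  obtain ⟨h0, h1⟩ := hπ
  obtain ⟨hb0, hb1⟩ := hπb
  have h1' : 0 < 1 - π := by linarith
  have hw : 0 < (1 - ψ) * (1 - π) := mul_pos (by linarith) h1'
  have hlog₁ : Real.log (πb / π) ≤ πb / π - 1 :=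
    Real.log_le_sub_one_of_pos (div_pos hb0 h0)
  have hlog₂ : Real.log ((1 - πb) / (1 - π)) < (1 - πb) / (1 - π) - 1 := by
    refine Real.log_lt_sub_one_of_pos (div_pos (by linarith) h1') fun h => hne ?_
    rw [div_eq_one_iff_eq h1'.ne'] at h
    linarith
  -- The tangent-line bounds `log x ≤ x - 1`, averaged with the given weights, add up exactly to
  -- the right-hand side; strictness comes from the second weight, which is positive since `ψ < 1`.
  have hsum : (1 - (1 - ψ) * (1 - π)) * (πb / π - 1)
      + (1 - ψ) * (1 - π) * ((1 - πb) / (1 - π) - 1) = ψ * (πb - π) / π := by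
    field_simp
    ring
  have key : (1 - (1 - ψ) * (1 - π)) * Real.log (πb / π)
      + (1 - ψ) * (1 - π) * Real.log ((1 - πb) / (1 - π)) < ψ * (πb - π) / π := by
    rw [← hsum]
    exact add_lt_add_of_le_of_lt (mul_le_mul_of_nonneg_left hlog₁ (by linarith))
      (mul_lt_mul_of_pos_left hlog₂ hw)
  exact ⟨key, fun hψ0 hlt => key.trans
    (div_neg_of_neg_of_pos (mul_neg_of_pos_of_neg hψ0 (by linarith)) h0)⟩
end

section
/- For every ψ ∈ (−∞,1) \ {0} and fixed w > 0, the steady-state growth-rate function r*(ψ) = (1/ε)·[ (ȳ₁/(k̄v̄))·π̄₁·(π̄₁/π₁(ψ,w))^{(1−ψ)/ψ} − ρ − δ_k ] is differentiable in ψ with dr*/dψ = −(ȳ₁/(k̄v̄))·(π̄₁/(εψ²))·(π̄₁/π₁(ψ,w))^{(1−ψ)/ψ}·{ [1 − (1−ψ)(1−π₁(ψ,w))]·ln(π̄₁/π₁(ψ,w)) + (1−ψ)(1−π₁(ψ,w))·ln((1−π̄₁)/(1−π₁(ψ,w))) }. -/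
/-- The steady-state growth rate
`r*(ψ) = (1/ε)·[(ȳ₁/(k̄v̄))·π̄₁·(π̄₁/π₁(ψ,w))^{(1−ψ)/ψ} − ρ − δ_k]`. -/
noncomputable def rstar (yb kb vb πb wb m w ε ρ δk ψ : ℝ) : ℝ :=
  1 / ε * (yb / (kb * vb) * πb * (πb / pi1 wb m ψ w) ^ ((1 - ψ) / ψ) - ρ - δk)

lemma pi1_pos {wb m w : ℝ} (hwb : 0 < wb) (hm : 0 < m) (hw : 0 < w) (ψ : ℝ) :
    0 < pi1 wb m ψ w := by
  unfold pi1
  positivity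

/-- The share solves the logistic equation in `ψ` with rate `log w - log w̄`. -/
lemma hasDerivAt_pi1 {wb m w : ℝ} (hwb : 0 < wb) (hm : 0 < m) (hw : 0 < w) (ψ : ℝ) :
    HasDerivAt (fun t => pi1 wb m t w)
      (pi1 wb m ψ w * (1 - pi1 wb m ψ w) * (Real.log w - Real.log wb)) ψ := by
  have h1 : HasDerivAt (fun t : ℝ => wb ^ (1 - t)) (Real.log wb * (-1) * wb ^ (1 - ψ)) ψ :=
    ((hasDerivAt_id ψ).const_sub 1).const_rpow hwb
  have h2 : HasDerivAt (fun t : ℝ => w ^ t) (Real.log w * 1 * w ^ ψ) ψ :=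
    (hasDerivAt_id ψ).const_rpow hw
  have hA : 0 < wb ^ (1 - ψ) := by positivity
  have hB : 0 < w ^ ψ := by positivity
  have hx := h1.mul h2
  have hne : wb ^ (1 - ψ) * w ^ ψ + m ≠ 0 := by positivity
  refine (hx.div (hx.add_const m) hne).congr_deriv ?_
  simp only [pi1, Pi.mul_apply]
  field_simp
  ring

/-- The log-odds of the share are affine in `ψ` with slope `log w - log w̄`; here they are
compared with the baseline odds `w̄ / m`. -/
lemma log_one_sub_div {wb m w : ℝ} (hwb : 0 < wb) (hm : 0 < m) (hw : 0 < w) (ψ : ℝ) :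
    Real.log ((1 - wb / (wb + m)) / (1 - pi1 wb m ψ w)) =
      Real.log (wb / (wb + m) / pi1 wb m ψ w) + ψ * (Real.log w - Real.log wb) := by
  have hA : 0 < wb ^ (1 - ψ) := by positivity
  have hB : 0 < w ^ ψ := by positivity
  have e1 : 1 - wb / (wb + m) = m / (wb + m) := by
    field_simp
    ring
  have e2 : 1 - pi1 wb m ψ w = m / (wb ^ (1 - ψ) * w ^ ψ + m) := by
    unfold pi1
    field_simp
    ring
  rw [e1, e2, pi1, Real.log_div (by positivity) (by positivity),
    Real.log_div (by positivity) (by positivity), Real.log_div (by positivity) (by positivity),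
    Real.log_div (by positivity) (by positivity), Real.log_div (by positivity) (by positivity),
    Real.log_div (by positivity) (by positivity), Real.log_mul hA.ne' hB.ne',
    Real.log_rpow hwb, Real.log_rpow hw]
  ring

/-- for every `ψ < 1` with `ψ ≠ 0` and fixed `w > 0`, the steady-state
growth-rate function `r*` is differentiable in `ψ` with
`dr*/dψ = −(ȳ₁/(k̄v̄))·(π̄₁/(εψ²))·(π̄₁/π₁)^{(1−ψ)/ψ}·{[1 − (1−ψ)(1−π₁)]·ln(π̄₁/π₁)
+ (1−ψ)(1−π₁)·ln((1−π̄₁)/(1−π₁))}`. -/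
theorem stmt_15 (kb hb yb ub vb m ε ρ δk wb πb w ψ : ℝ)
    (hkb : 0 < kb) (hhb : 0 < hb) (hyb : 0 < yb)
    (hub : ub ∈ Set.Ioo (0 : ℝ) 1) (hvb : vb ∈ Set.Ioo (0 : ℝ) 1) (hm : 0 < m)
    (hε : 0 < ε) (hwb : wb = kb * vb / (hb * ub)) (hπb : πb = wb / (wb + m))
    (hw : 0 < w) (hψ : ψ < 1) (hψ0 : ψ ≠ 0) :
    HasDerivAt (fun t : ℝ => rstar yb kb vb πb wb m w ε ρ δk t)
      (-(yb / (kb * vb)) * (πb / (ε * ψ ^ 2)) * (πb / pi1 wb m ψ w) ^ ((1 - ψ) / ψ)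
        * ((1 - (1 - ψ) * (1 - pi1 wb m ψ w)) * Real.log (πb / pi1 wb m ψ w)
          + (1 - ψ) * (1 - pi1 wb m ψ w)
            * Real.log ((1 - πb) / (1 - pi1 wb m ψ w)))) ψ := by
  have hwb0 : 0 < wb := by
    rw [hwb]
    exact div_pos (mul_pos hkb hvb.1) (mul_pos hhb hub.1)
  have hπb0 : 0 < πb := by
    rw [hπb]
    positivity
  have hπ := pi1_pos hwb0 hm hw ψ
  have hG : 0 < πb / pi1 wb m ψ w := div_pos hπb0 hπ
  have hlog := log_one_sub_div hwb0 hm hw ψ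
  rw [← hπb] at hlog
  have hexp : HasDerivAt (fun t : ℝ => (1 - t) / t) (((-1) * ψ - (1 - ψ) * 1) / ψ ^ 2) ψ :=
    ((hasDerivAt_id ψ).const_sub 1).div (hasDerivAt_id ψ) hψ0
  have hbase := (hasDerivAt_const ψ πb).div (hasDerivAt_pi1 hwb0 hm hw ψ) hπ.ne'
  have hpow := hbase.rpow hexp hG
  have hr := (((hpow.const_mul (yb / (kb * vb) * πb)).sub_const ρ).sub_const δk).const_mul (1 / ε)
  refine hr.congr_deriv ?_
  have hvb0 := hvb.1
  simp only [Pi.div_apply]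
  rw [hlog, Real.rpow_sub_one hG.ne']
  generalize (πb / pi1 wb m ψ w) ^ ((1 - ψ) / ψ) = R
  generalize Real.log (πb / pi1 wb m ψ w) = G
  generalize pi1 wb m ψ w = p at *
  field_simp
  ring
end

section
/- Suppose ψ ∈ (0,1), w > w̄, and (1−ψ)(1−π₁(ψ,w)) ≤ 1. Then dr*/dψ > 0 at ψ; that is, the common steady-state growth rate r* is strictly increasing in the substitution parameter (hence in the elasticity of substitution) whenever the effective capital ratio w = kv/(hu) exceeds its baseline value w̄. -/
/-- The ratio of the baseline share to the share at `t` is a convex combination of `1` and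
`(w / a) ^ (-t)`. -/
lemma ratio_eq {a m w : ℝ} (ha : 0 < a) (hm : 0 < m) (hw : 0 < w) (t : ℝ) :
    a / (a + m) / pi1 a m t w =
      a / (a + m) + m / (a + m) * Real.exp (-(t * Real.log (w / a))) := by
  have h : a ^ (1 - t) * w ^ t = a * Real.exp (t * Real.log (w / a)) := by
    rw [Real.rpow_def_of_pos ha, Real.rpow_def_of_pos hw, Real.log_div hw.ne' ha.ne',
      ← Real.exp_add]
    calc Real.exp (Real.log a * (1 - t) + Real.log w * t)
        = Real.exp (Real.log a + t * (Real.log w - Real.log a)) := by congr 1; ring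
      _ = a * Real.exp (t * (Real.log w - Real.log a)) := by
        rw [Real.exp_add, Real.exp_log ha]
  rw [pi1, h, Real.exp_neg]
  have hE := Real.exp_pos (t * Real.log (w / a))
  generalize Real.exp (t * Real.log (w / a)) = E at hE
  field_simp

/-- The tangent-line inequality at `x`, compared with the value `0` at the origin, for the concave
function `x ↦ -log (p + q exp (-x))`, where `p + q = 1`. -/
lemma share_mul_le_neg_log {p q : ℝ} (hp : 0 < p) (hq : 0 < q) (hpq : p + q = 1) (x : ℝ) :
    x * (q * Real.exp (-x) / (p + q * Real.exp (-x))) ≤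
      -Real.log (p + q * Real.exp (-x)) := by
  have hE := Real.exp_pos (-x)
  have hB : 0 < p + q * Real.exp (-x) := by positivity
  rw [← Real.log_inv, Real.le_log_iff_exp_le (inv_pos.2 hB)]
  -- Jensen for `exp` at `0` and `x`, with the weights `p / B` and `q exp (-x) / B`.
  have h := convexOn_exp.2 (Set.mem_univ 0) (Set.mem_univ x)
    (show 0 ≤ p / (p + q * Real.exp (-x)) by positivity)
    (show 0 ≤ q * Real.exp (-x) / (p + q * Real.exp (-x)) by positivity)
    (by rw [← add_div, div_self hB.ne'])
  simp only [smul_eq_mul, mul_zero, zero_add, Real.exp_zero, mul_one] at h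
  rw [mul_comm x]
  refine h.trans_eq ?_
  rw [div_mul_eq_mul_div, mul_assoc, ← Real.exp_add, neg_add_cancel, Real.exp_zero, mul_one,
    ← add_div, hpq, one_div]

/-- if `ψ ∈ (0,1)`, `w > w̄` and `(1−ψ)(1−π₁(ψ,w)) ≤ 1`, then `dr*/dψ > 0`
at `ψ`: the common steady-state growth rate is strictly increasing in the substitution
parameter whenever the effective capital ratio exceeds its baseline value. -/
theorem stmt_16 (kb hb yb ub vb m ε ρ δk wb πb w ψ : ℝ)
    (hkb : 0 < kb) (hhb : 0 < hb) (hyb : 0 < yb)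
    (hub : ub ∈ Set.Ioo (0 : ℝ) 1) (hvb : vb ∈ Set.Ioo (0 : ℝ) 1) (hm : 0 < m)
    (hε : 0 < ε) (hwb : wb = kb * vb / (hb * ub)) (hπb : πb = wb / (wb + m))
    (hψ : ψ ∈ Set.Ioo (0 : ℝ) 1) (hw : wb < w)
    (hwt : (1 - ψ) * (1 - pi1 wb m ψ w) ≤ 1) :
    0 < deriv (fun t : ℝ => rstar yb kb vb πb wb m w ε ρ δk t) ψ := by
  obtain ⟨hψ0, hψ1⟩ := hψ
  have hvb0 : 0 < vb := hvb.1
  have hub0 : 0 < ub := hub.1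
  have ha : 0 < wb := by rw [hwb]; positivity
  have hw0 : 0 < w := ha.trans hw
  have hL : 0 < Real.log (w / wb) := Real.log_pos ((one_lt_div ha).2 hw)
  have hp : 0 < πb := by rw [hπb]; positivity
  obtain ⟨q, hq⟩ : ∃ q, q = m / (wb + m) := ⟨_, rfl⟩
  have hq0 : 0 < q := by rw [hq]; positivity
  have hpq : πb + q = 1 := by rw [hπb, hq]; field_simp
  have hratio : ∀ t, πb / pi1 wb m t w = πb + q * Real.exp (-(t * Real.log (w / wb))) := by
    intro t
    rw [hq, hπb]
    exact ratio_eq ha hm hw0 t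
  generalize Real.log (w / wb) = L at hL hratio
  have hBpos : ∀ t, 0 < πb + q * Real.exp (-(t * L)) := fun t => by positivity
  have hfun : (fun t : ℝ => rstar yb kb vb πb wb m w ε ρ δk t) = fun t =>
      1 / ε * (yb / (kb * vb) * πb *
        Real.exp (Real.log (πb + q * Real.exp (-(t * L))) * ((1 - t) / t)) - ρ - δk) := by
    funext t
    rw [rstar, hratio t, Real.rpow_def_of_pos (hBpos t)]
  have hB : HasDerivAt (fun t : ℝ => πb + q * Real.exp (-(t * L)))
      (q * (Real.exp (-(ψ * L)) * -(1 * L))) ψ :=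
    ((((hasDerivAt_id ψ).mul_const L).neg.exp).const_mul q).const_add πb
  have hquot : HasDerivAt (fun t : ℝ => (1 - t) / t)
      (((-1) * ψ - (1 - ψ) * 1) / ψ ^ 2) ψ :=
    ((hasDerivAt_id ψ).const_sub 1).div (hasDerivAt_id ψ) hψ0.ne'
  have hexpo := (hB.log (hBpos ψ).ne').mul hquot
  have hder := ((((hexpo.exp).const_mul (yb / (kb * vb) * πb)).sub_const ρ).sub_const
    δk).const_mul (1 / ε)
  rw [hfun]
  refine lt_of_lt_of_eq ?_ hder.deriv.symm
  refine mul_pos (by positivity) (mul_pos (by positivity) (mul_pos (Real.exp_pos _) ?_))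
  have key := share_mul_le_neg_log hp hq0 hpq (ψ * L)
  have hs : 0 < q * Real.exp (-(ψ * L)) / (πb + q * Real.exp (-(ψ * L))) :=
    div_pos (by positivity) (hBpos ψ)
  have hpos : 0 < (-Real.log (πb + q * Real.exp (-(ψ * L))) - (1 - ψ) * (ψ * L *
      (q * Real.exp (-(ψ * L)) / (πb + q * Real.exp (-(ψ * L)))))) / ψ ^ 2 := by
    have : 0 < ψ * (ψ * L * (q * Real.exp (-(ψ * L)) / (πb + q * Real.exp (-(ψ * L))))) := by
      positivity
    refine div_pos ?_ (by positivity)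
    linarith
  refine lt_of_lt_of_eq hpos ?_
  have hB0 := (hBpos ψ).ne'
  generalize Real.log (πb + q * Real.exp (-(ψ * L))) = l
  generalize Real.exp (-(ψ * L)) = E at hB0 ⊢
  field_simp
  ring
end

section
/- For every ψ < 1 with ψ ≠ 0 and every w > 0, the marginal product expression of the normalized good-sector CES function satisfies the identity α₁(ψ)·A₁(ψ)·w^{ψ−1}·(α₁(ψ)·w^{ψ} + 1 − α₁(ψ))^{(1−ψ)/ψ} = (ȳ₁/(k̄v̄))·π̄₁·(π̄₁/π₁(ψ,w))^{(1−ψ)/ψ}. -/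
/-- The power of the ratio `w̄ / (w̄^{1−ψ} w^ψ) = (w̄/w)^ψ` that the factor `π̄₁/π₁` contributes. -/
theorem ratio_rpow {wb w ψ : ℝ} (hwb : 0 < wb) (hw : 0 < w) (hψ0 : ψ ≠ 0) :
    (wb / (wb ^ (1 - ψ) * w ^ ψ)) ^ ((1 - ψ) / ψ) = wb ^ (1 - ψ) * w ^ (ψ - 1) := by
  have hB : wb ^ (1 - ψ) * wb ^ ψ = wb := by
    rw [← Real.rpow_add hwb, sub_add_cancel, Real.rpow_one]
  have hB0 : 0 < wb ^ (1 - ψ) := Real.rpow_pos_of_pos hwb _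
  have hbase : wb / (wb ^ (1 - ψ) * w ^ ψ) = (wb / w) ^ ψ := by
    rw [Real.div_rpow hwb.le hw.le]
    nth_rewrite 1 [← hB]
    exact mul_div_mul_left _ _ hB0.ne'
  rw [hbase, ← Real.rpow_mul (div_pos hwb hw).le, mul_div_cancel₀ _ hψ0,
    Real.div_rpow hwb.le hw.le, div_eq_mul_inv, ← Real.rpow_neg hw.le, neg_sub]

/-- for every `ψ < 1` with `ψ ≠ 0` and every `w > 0`,
`α₁(ψ)·A₁(ψ)·w^{ψ−1}·(α₁(ψ)w^ψ + 1 − α₁(ψ))^{(1−ψ)/ψ}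
  = (ȳ₁/(k̄v̄))·π̄₁·(π̄₁/π₁(ψ,w))^{(1−ψ)/ψ}`. -/
theorem stmt_17 (kb hb yb ub vb m wb πb w ψ : ℝ)
    (hkb : 0 < kb) (hhb : 0 < hb) (hyb : 0 < yb)
    (hub : ub ∈ Set.Ioo (0 : ℝ) 1) (hvb : vb ∈ Set.Ioo (0 : ℝ) 1) (hm : 0 < m)
    (hwb : wb = kb * vb / (hb * ub)) (hπb : πb = wb / (wb + m))
    (hψ : ψ < 1) (hψ0 : ψ ≠ 0) (hw : 0 < w) :
    alpha1 wb m ψ * Anorm1 yb hb ub wb m ψ * w ^ (ψ - 1)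
        * (alpha1 wb m ψ * w ^ ψ + 1 - alpha1 wb m ψ) ^ ((1 - ψ) / ψ)
      = yb / (kb * vb) * πb * (πb / pi1 wb m ψ w) ^ ((1 - ψ) / ψ) := by
  obtain ⟨hu, -⟩ := hub
  obtain ⟨hv, -⟩ := hvb
  have hwb0 : 0 < wb := by rw [hwb]; positivity
  have hratio := ratio_rpow hwb0 hw hψ0
  have hyw : yb / (hb * ub) = yb / (kb * vb) * wb := by rw [hwb]; field_simp
  have hexp : 1 / ψ = (1 - ψ) / ψ + 1 := by field_simp; ring
  unfold alpha1 Anorm1 pi1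
  rw [hπb, hyw, hexp]
  have hB : 0 < wb ^ (1 - ψ) := Real.rpow_pos_of_pos hwb0 _
  have hP : 0 < w ^ ψ := Real.rpow_pos_of_pos hw _
  generalize wb ^ (1 - ψ) = B at *
  generalize w ^ ψ = P at *
  generalize (1 - ψ) / ψ = e at *
  have hleft : B / (B + m) * P + 1 - B / (B + m) = (B * P + m) / (B + m) := by
    field_simp; ring
  have hcancel : (B * P + m) / (wb + m) = (B + m) / (wb + m) * ((B * P + m) / (B + m)) := by
    field_simp
  have hright : wb / (wb + m) / (B * P / (B * P + m))
      = (B + m) / (wb + m) * ((B * P + m) / (B + m)) * (wb / (B * P)) := by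
    rw [← hcancel]; field_simp
  rw [hleft, hright, Real.mul_rpow (by positivity) (by positivity),
    Real.mul_rpow (by positivity) (by positivity), hratio,
    Real.rpow_add (by positivity), Real.rpow_one]
  field_simp
end

section
/- Let k, h > 0, u, v ∈ (0,1), λ, μ > 0, A₁, A₂ > 0, α₁, α₂ ∈ (0,1), and ψ₁, ψ₂ < 1 with ψ₁, ψ₂ ≠ 0, and set P̄₁ = α₁(kv)^{ψ₁} + (1−α₁)(hu)^{ψ₁}, P̄₂ = α₂(k(1−v))^{ψ₂} + (1−α₂)(h(1−u))^{ψ₂}. If the two first-order conditions hold, namely A₂·P̄₂^{(1−ψ₂)/ψ₂}·(1−α₂)·(h(1−u))^{ψ₂}·μ/(1−u) = A₁·P̄₁^{(1−ψ₁)/ψ₁}·(1−α₁)·(hu)^{ψ₁}·λ/u and A₂·P̄₂^{(1−ψ₂)/ψ₂}·α₂·(k(1−v))^{ψ₂}·μ/(1−v) = A₁·P̄₁^{(1−ψ₁)/ψ₁}·α₁·(kv)^{ψ₁}·λ/v, then θ·(kv/(hu))^{ψ₁−ψ₂} = (v(1−u)/(u(1−v)))^{1−ψ₂}, where θ = α₁(1−α₂)/(α₂(1−α₁)).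 -/
/-!
Write `w = kv/(hu)` and `τ = v(1-u)/(u(1-v))`. Both sides of both first-order conditions are nonzero,
so dividing one condition by the other cancels the common factors `A₂ P̄₂^((1-ψ₂)/ψ₂) μ` and
`A₁ P̄₁^((1-ψ₁)/ψ₁) λ` and leaves `θ w^ψ₁ = τ (k(1-v)/(h(1-u)))^ψ₂`. Since `k(1-v)/(h(1-u)) = w/τ`,
this is `θ w^ψ₁ = τ (w/τ)^ψ₂`, and dividing by `w^ψ₂` gives the claim.
-/

/-- The quotient of two first-order conditions in cross-multiplied form, with the common factors
`P` (times `A`, `m`) and `Q` (times `B`, `l`) cancelled. -/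
lemma foc_quotient {A B P Q m l p q p' q' a b c d u v : ℝ}
    (hA : A ≠ 0) (hB : B ≠ 0) (hP : P ≠ 0) (hQ : Q ≠ 0) (hm : m ≠ 0) (hl : l ≠ 0)
    (hu : u ≠ 0) (hv : v ≠ 0) (hu' : 1 - u ≠ 0) (hv' : 1 - v ≠ 0)
    (h₁ : A * P * p' * b * m / (1 - u) = B * Q * q' * d * l / u)
    (h₂ : A * P * p * a * m / (1 - v) = B * Q * q * c * l / v) :
    q * p' * (c * b) * (u * (1 - v)) = p * q' * (d * a) * (v * (1 - u)) := by
  rw [div_eq_div_iff hu' hu] at h₁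
  rw [div_eq_div_iff hv' hv] at h₂
  have hne : A * P * m * (B * Q * l) ≠ 0 := by simp [*]
  apply mul_left_cancel₀ hne
  linear_combination (B * Q * q * c * l * (1 - v)) * h₁ - (B * Q * q' * d * l * (1 - u)) * h₂

/-- the two first-order conditions of the Hamiltonian with respect to the
controls `u` and `v` imply the allocation relation `θ·(kv/(hu))^{ψ₁−ψ₂} = τ^{1−ψ₂}`, where
`θ = α₁(1−α₂)/(α₂(1−α₁))` and `τ = v(1−u)/(u(1−v))`. -/
theorem stmt_19 (k h u v lam mu A₁ A₂ α₁ α₂ ψ₁ ψ₂ : ℝ)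
    (hk : 0 < k) (hh : 0 < h)
    (hu : u ∈ Set.Ioo (0 : ℝ) 1) (hv : v ∈ Set.Ioo (0 : ℝ) 1)
    (hlam : 0 < lam) (hmu : 0 < mu) (hA₁ : 0 < A₁) (hA₂ : 0 < A₂)
    (hα₁ : α₁ ∈ Set.Ioo (0 : ℝ) 1) (hα₂ : α₂ ∈ Set.Ioo (0 : ℝ) 1)
    (hψ₁ : ψ₁ < 1) (hψ₁0 : ψ₁ ≠ 0) (hψ₂ : ψ₂ < 1) (hψ₂0 : ψ₂ ≠ 0)
    (hfoc_u : A₂ * (α₂ * (k * (1 - v)) ^ ψ₂ + (1 - α₂) * (h * (1 - u)) ^ ψ₂) ^ ((1 - ψ₂) / ψ₂)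
          * (1 - α₂) * (h * (1 - u)) ^ ψ₂ * mu / (1 - u)
        = A₁ * (α₁ * (k * v) ^ ψ₁ + (1 - α₁) * (h * u) ^ ψ₁) ^ ((1 - ψ₁) / ψ₁)
          * (1 - α₁) * (h * u) ^ ψ₁ * lam / u)
    (hfoc_v : A₂ * (α₂ * (k * (1 - v)) ^ ψ₂ + (1 - α₂) * (h * (1 - u)) ^ ψ₂) ^ ((1 - ψ₂) / ψ₂)
          * α₂ * (k * (1 - v)) ^ ψ₂ * mu / (1 - v)
        = A₁ * (α₁ * (k * v) ^ ψ₁ + (1 - α₁) * (h * u) ^ ψ₁) ^ ((1 - ψ₁) / ψ₁)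
          * α₁ * (k * v) ^ ψ₁ * lam / v) :
    α₁ * (1 - α₂) / (α₂ * (1 - α₁)) * (k * v / (h * u)) ^ (ψ₁ - ψ₂)
      = (v * (1 - u) / (u * (1 - v))) ^ (1 - ψ₂) := by
  obtain ⟨hu0, hu1⟩ := hu
  obtain ⟨hv0, hv1⟩ := hv
  obtain ⟨ha0, ha1⟩ := hα₁
  obtain ⟨hb0, hb1⟩ := hα₂
  have hu' : 0 < 1 - u := sub_pos.2 hu1
  have hv' : 0 < 1 - v := sub_pos.2 hv1
  have ha' : 0 < 1 - α₁ := sub_pos.2 ha1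
  have hb' : 0 < 1 - α₂ := sub_pos.2 hb1
  have key := foc_quotient hA₂.ne' hA₁.ne' (by positivity) (by positivity) hmu.ne' hlam.ne'
    hu0.ne' hv0.ne' hu'.ne' hv'.ne' hfoc_u hfoc_v
  have hw : 0 < k * v / (h * u) := by positivity
  have hτ : 0 < v * (1 - u) / (u * (1 - v)) := by positivity
  have hwτ : k * v / (h * u) / (v * (1 - u) / (u * (1 - v))) = k * (1 - v) / (h * (1 - u)) := by
    field_simp
  have hθ : α₁ * (1 - α₂) / (α₂ * (1 - α₁)) * (k * v / (h * u)) ^ ψ₁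
      = v * (1 - u) / (u * (1 - v)) * (k * (1 - v) / (h * (1 - u))) ^ ψ₂ := by
    rw [Real.div_rpow (by positivity) (by positivity), Real.div_rpow (by positivity) (by positivity),
      div_mul_div_comm, div_mul_div_comm, div_eq_div_iff (by positivity) (by positivity)]
    linear_combination key
  rw [← hwτ, Real.div_rpow hw.le hτ.le] at hθ
  rw [Real.rpow_sub hw, Real.rpow_sub hτ, Real.rpow_one, ← mul_div_assoc, hθ]
  have hwψ : (k * v / (h * u)) ^ ψ₂ ≠ 0 := (Real.rpow_pos_of_pos hw _).ne'
  rw [← mul_div_assoc, div_right_comm, mul_div_cancel_right₀ _ hwψ]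
end
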